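/- Given a finite Markov decision process with R = max_{s,a} |r(s,a)|, fix β > 0, let V₀ : S → ℝ be arbitrary, and define V_{k+1} = T_β V_k. Then for every k ≥ 0, max_s V_k(s) − min_s V_k(s) ≤ 2R·(1−γ^k)/(1−γ) + γ^k·(max_s V₀(s) − min_s V₀(s)). -/

import Mathlib

/-!
A Boltzmann average is a convex combination of the numbers it averages, so one iteration maps value
functions with values in `[m, M]` to value functions with values in `[l + γ m, u + γ M]`, where
`[l, u]` contains all rewards. The range `D` of the iterates therefore obeys the affine recursion
`D (k + 1) ≤ (u - l) + γ D k`, whose solution is a geometric sum; the theorem is the case `l = -R`,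
`u = R`.
-/

noncomputable def boltz {ι : Type*} [Fintype ι] (β : ℝ) (x : ι → ℝ) : ℝ :=
  (∑ i, Real.exp (β * x i) * x i) / ∑ i, Real.exp (β * x i)

noncomputable def fmax {ι : Type*} [Fintype ι] [Nonempty ι] (x : ι → ℝ) : ℝ :=
  Finset.univ.sup' Finset.univ_nonempty x

noncomputable def fmin {ι : Type*} [Fintype ι] [Nonempty ι] (x : ι → ℝ) : ℝ :=
  Finset.univ.inf' Finset.univ_nonempty x

noncomputable def Qval {S A : Type*} [Fintype S] (p : S → A → S → ℝ) (r : S → A → ℝ)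
    (γ : ℝ) (V : S → ℝ) (s : S) (a : A) : ℝ :=
  r s a + γ * ∑ s', p s a s' * V s'

noncomputable def Tm {S A : Type*} [Fintype S] [Fintype A] [Nonempty A]
    (p : S → A → S → ℝ) (r : S → A → ℝ) (γ : ℝ) (V : S → ℝ) (s : S) : ℝ :=
  fmax (Qval p r γ V s)

noncomputable def Tb {S A : Type*} [Fintype S] [Fintype A]
    (p : S → A → S → ℝ) (r : S → A → ℝ) (γ : ℝ) (β : ℝ) (V : S → ℝ) (s : S) : ℝ :=
  boltz β (Qval p r γ V s)

noncomputable def supNorm {S : Type*} [Fintype S] [Nonempty S] (V : S → ℝ) : ℝ :=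
  fmax (fun s => |V s|)

open Finset Set

section Range

variable {ι : Type*} [Fintype ι] [Nonempty ι] {x : ι → ℝ}

theorem le_fmax (x : ι → ℝ) (i : ι) : x i ≤ fmax x :=
  le_sup' x (mem_univ i)

theorem fmin_le (x : ι → ℝ) (i : ι) : fmin x ≤ x i :=
  inf'_le x (mem_univ i)

theorem fmax_sub_fmin_le {m M : ℝ} (hx : ∀ i, x i ∈ Icc m M) : fmax x - fmin x ≤ M - m :=
  sub_le_sub (sup'_le _ _ fun i _ ↦ (hx i).2) (le_inf' _ _ fun i _ ↦ (hx i).1)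

theorem boltz_mem_of_convex {s : Set ℝ} (hs : Convex ℝ s) (β : ℝ) (hx : ∀ i, x i ∈ s) :
    boltz β x ∈ s := by
  have boltz_eq : boltz β x = univ.centerMass (fun i ↦ Real.exp (β * x i)) x := by
    simp only [boltz, centerMass, smul_eq_mul, div_eq_inv_mul]
  rw [boltz_eq]
  exact hs.centerMass_mem (fun i _ ↦ (Real.exp_pos _).le)
    (sum_pos (fun i _ ↦ Real.exp_pos _) univ_nonempty) fun i _ ↦ hx i

end Range

theorem le_mul_geom_sum_add_of_succ_le {R : Type*} [CommSemiring R] [PartialOrder R]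
    [IsOrderedRing R] {D : ℕ → R} {a c : R} (ha : 0 ≤ a) (hD : ∀ k, D (k + 1) ≤ c + a * D k)
    (n : ℕ) : D n ≤ c * ∑ i ∈ range n, a ^ i + a ^ n * D 0 := by
  have hmono : Monotone fun t : R ↦ c + a * t := fun _ _ h ↦ by dsimp only; gcongr
  refine hmono.seq_le_seq (y := fun k ↦ c * ∑ i ∈ range k, a ^ i + a ^ k * D 0) n
    (by simp) (fun k _ ↦ hD k) fun k _ ↦ le_of_eq ?_
  rw [geom_sum_succ]
  ring

section ValueIteration

variable {S A : Type*} [Fintype S] {p : S → A → S → ℝ} {r : S → A → ℝ} {γ l u : ℝ}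

theorem Qval_mem_Icc (hp0 : ∀ s a s', 0 ≤ p s a s') (hp1 : ∀ s a, ∑ s', p s a s' = 1)
    (hγ : 0 ≤ γ) (hr : ∀ s a, r s a ∈ Icc l u) {V : S → ℝ} {m M : ℝ} (hV : ∀ s, V s ∈ Icc m M)
    (s : S) (a : A) : Qval p r γ V s a ∈ Icc (l + γ * m) (u + γ * M) := by
  have havg : ∑ s', p s a s' * V s' ∈ Icc m M :=
    (convex_Icc m M).sum_mem (fun s' _ ↦ hp0 s a s') (hp1 s a) fun s' _ ↦ hV s'
  exact ⟨add_le_add (hr s a).1 (mul_le_mul_of_nonneg_left havg.1 hγ),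
    add_le_add (hr s a).2 (mul_le_mul_of_nonneg_left havg.2 hγ)⟩

variable [Fintype A] [Nonempty S] [Nonempty A]

theorem fmax_sub_fmin_Tb_le (hp0 : ∀ s a s', 0 ≤ p s a s') (hp1 : ∀ s a, ∑ s', p s a s' = 1)
    (hγ : 0 ≤ γ) (hr : ∀ s a, r s a ∈ Icc l u) (β : ℝ) (V : S → ℝ) :
    fmax (Tb p r γ β V) - fmin (Tb p r γ β V) ≤ (u - l) + γ * (fmax V - fmin V) := by
  have hTb (s : S) : Tb p r γ β V s ∈ Icc (l + γ * fmin V) (u + γ * fmax V) :=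
    boltz_mem_of_convex (convex_Icc _ _) β
      (Qval_mem_Icc hp0 hp1 hγ hr (fun s' ↦ ⟨fmin_le V s', le_fmax V s'⟩) s)
  linarith [fmax_sub_fmin_le hTb]

theorem boltz_vi_range_bound_general (hp0 : ∀ s a s', 0 ≤ p s a s')
    (hp1 : ∀ s a, ∑ s', p s a s' = 1) (hγ : 0 ≤ γ) (hr : ∀ s a, r s a ∈ Icc l u)
    (β : ℕ → ℝ) {V : ℕ → S → ℝ} (hV : ∀ k, V (k + 1) = Tb p r γ (β k) (V k)) (k : ℕ) :
    fmax (V k) - fmin (V k) ≤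
      (u - l) * ∑ i ∈ range k, γ ^ i + γ ^ k * (fmax (V 0) - fmin (V 0)) :=
  le_mul_geom_sum_add_of_succ_le (D := fun k ↦ fmax (V k) - fmin (V k)) hγ
    (fun k ↦ hV k ▸ fmax_sub_fmin_Tb_le hp0 hp1 hγ hr (β k) (V k)) k

end ValueIteration

theorem boltz_vi_range_bound {S A : Type*} [Fintype S] [Fintype A] [Nonempty S] [Nonempty A]
    (p : S → A → S → ℝ) (hp0 : ∀ s a s', 0 ≤ p s a s') (hp1 : ∀ s a, ∑ s', p s a s' = 1)
    (r : S → A → ℝ) (γ : ℝ) (hγ0 : 0 ≤ γ) (hγ1 : γ < 1)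
    (R : ℝ) (hR : R = fmax (fun sa : S × A => |r sa.1 sa.2|))
    (β : ℝ) (hβ : 0 < β)
    (V₀ : S → ℝ) (Vseq : ℕ → S → ℝ)
    (hV0 : Vseq 0 = V₀)
    (hVsucc : ∀ k, Vseq (k + 1) = Tb p r γ β (Vseq k)) :
    ∀ k : ℕ,
      fmax (Vseq k) - fmin (Vseq k)
        ≤ 2 * R * (1 - γ ^ k) / (1 - γ) + γ ^ k * (fmax V₀ - fmin V₀) := by
  intro k
  have hr (s : S) (a : A) : r s a ∈ Icc (-R) R :=
    abs_le.mp (hR ▸ le_fmax (fun sa : S × A ↦ |r sa.1 sa.2|) (s, a))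
  have hgeom : (1 - γ ^ k) / (1 - γ) = ∑ i ∈ range k, γ ^ i := by
    rw [← mul_neg_geom_sum, mul_div_cancel_left₀ _ (sub_ne_zero.mpr hγ1.ne')]
  rw [mul_div_assoc, hgeom, ← hV0, two_mul, ← sub_neg_eq_add R R]
  exact boltz_vi_range_bound_general hp0 hp1 hγ0 hr (fun _ ↦ β) hVsucc k
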